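/- Fix an integer n ≥ 1 and real numbers α ≥ 0, γ ∈ ℝ, and P₁₁, P₁₂, P₂₂, Q₁₁, Q₁₂, Q₂₂ satisfying the n-th Dirichlet algebraic Riccati equations: 0 = −2n²π²P₁₂ + Q₁₁ − n²π²γ²P₁₂², 0 = P₁₁ − αP₁₂ − n²π²P₂₂ + Q₁₂ − n²π²γ²P₁₂P₂₂, and 0 = 2P₁₂ − 2αP₂₂ + Q₂₂ − n²π²γ²P₂₂². Define the matrix-valued kernels P(x₁,x₂) = [[P₁₁,P₁₂],[P₁₂,P₂₂]] sin(nπx₁) sin(nπx₂) and Q(x₁,x₂) = [[Q₁₁,Q₁₂],[Q₁₂,Q₂₂]] sin(nπx₁) sin(nπx₂) on [0,1]². Then P vanishes whenever x₁ ∈ {0,1} or x₂ ∈ {0,1}, and for all (x₁,x₂) ∈ [0,1]² the Riccati partial differential equations hold: (i) ∂²P₂₁/∂x₁² + ∂²P₁₂/∂x₂² + Q₁₁ = γ² (∂P₁₂/∂x₂)(x₁,0) · (∂P₂₁/∂x₁)(0,x₂); (ii) P₁₁ − αP₁₂ + ∂²P₂₂/∂x₁² + Q₁₂ = γ² (∂P₁₂/∂x₂)(x₁,0)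 · (∂P₂₂/∂x₁)(0,x₂); (iii) P₁₁ − αP₂₁ + ∂²P₂₂/∂x₂² + Q₂₁ = γ² (∂P₂₂/∂x₂)(x₁,0) · (∂P₂₁/∂x₁)(0,x₂); (iv) P₁₂ + P₂₁ − 2αP₂₂ + Q₂₂ = γ² (∂P₂₂/∂x₂)(x₁,0) · (∂P₂₂/∂x₁)(0,x₂), where all kernel entries are evaluated at (x₁,x₂) unless indicated otherwise and P₂₁ = P₁₂, Q₂₁ = Q₁₂. -/

import Mathlib

/-- The single-mode Dirichlet kernel `c · sin(nπx₁) · sin(nπx₂)`. -/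
noncomputable def sinKer (c : ℝ) (n : ℕ) (x₁ x₂ : ℝ) : ℝ :=
  c * Real.sin ((n : ℝ) * Real.pi * x₁) * Real.sin ((n : ℝ) * Real.pi * x₂)

/-!
Separation of variables. On a kernel `P φ(x₁) φ(x₂)` with `φ'' = -μ φ`, each second derivative is
multiplication by `-μ`, and each boundary derivative at `0` replaces a factor `φ` by `φ'(0)`. Hence
`φ(x₁) φ(x₂)` factors out of the Riccati PDEs, and what remains is the algebraic Riccati equation
of the single oscillator `a'' = -μ a - α a'` driven through the input coefficient `φ'(0)`. For
`φ(x) = sin(nπx)` the number `n²π²` appears both as the eigenvalue `μ` and as `φ'(0)²`.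
-/

open scoped Matrix

/-- The matrix kernel `P φ(x₁) φ(x₂)` carried by a single spatial mode `φ`. -/
def modeKernel {m n : Type*} (φ : ℝ → ℝ) (P : Matrix m n ℝ) (x₁ x₂ : ℝ) : Matrix m n ℝ :=
  Matrix.of fun i j => P i j * φ x₁ * φ x₂

section modeKernel

variable {m n : Type*} (φ : ℝ → ℝ) (P : Matrix m n ℝ) (i : m) (j : n)

lemma modeKernel_apply (x₁ x₂ : ℝ) : modeKernel φ P x₁ x₂ i j = P i j * φ x₁ * φ x₂ := rfl

variable {φ} in
lemma modeKernel_eq_zero {x₁ x₂ : ℝ} (h : φ x₁ = 0 ∨ φ x₂ = 0) : modeKernel φ P x₁ x₂ = 0 := by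
  ext i j
  rcases h with h | h <;> simp [modeKernel_apply, h]

lemma deriv_modeKernel_left (x₂ : ℝ) :
    deriv (fun y => modeKernel φ P y x₂ i j) = fun y => P i j * deriv φ y * φ x₂ := by
  simp only [modeKernel_apply, deriv_mul_const_field', deriv_const_mul_field']

lemma deriv_modeKernel_right (x₁ : ℝ) :
    deriv (fun y => modeKernel φ P x₁ y i j) = fun y => P i j * φ x₁ * deriv φ y := by
  simp only [modeKernel_apply, deriv_const_mul_field']

end modeKernel

/-- `φ` is a classical solution of `-φ'' = μ φ`, the equation of a spatial mode. Without `contDiff`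
the junk value `deriv φ x = 0` would let discontinuous `φ` through; the equation is imposed on all
of `ℝ`, so that `deriv` need not be one-sided at the endpoints of `[0, 1]`. -/
structure IsLaplacianMode (φ : ℝ → ℝ) (μ : ℝ) : Prop where
  contDiff : ContDiff ℝ 2 φ
  deriv_deriv (x : ℝ) : deriv (deriv φ) x = -μ * φ x

namespace IsLaplacianMode

variable {m n : Type*} {φ : ℝ → ℝ} {μ : ℝ} (P : Matrix m n ℝ) (i : m) (j : n) (x₁ x₂ : ℝ)

lemma deriv_deriv_modeKernel_left (hφ : IsLaplacianMode φ μ) :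
    deriv (deriv fun y => modeKernel φ P y x₂ i j) x₁ = -μ * modeKernel φ P x₁ x₂ i j := by
  rw [deriv_modeKernel_left, deriv_mul_const_field, deriv_const_mul_field, hφ.deriv_deriv,
    modeKernel_apply]
  ring

lemma deriv_deriv_modeKernel_right (hφ : IsLaplacianMode φ μ) :
    deriv (deriv fun y => modeKernel φ P x₁ y i j) x₂ = -μ * modeKernel φ P x₁ x₂ i j := by
  rw [deriv_modeKernel_right, deriv_const_mul_field, hφ.deriv_deriv, modeKernel_apply]
  ring

end IsLaplacianMode

lemma deriv_sin_const_mul (k : ℝ) :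
    deriv (fun x => Real.sin (k * x)) = fun x => k * Real.cos (k * x) := by
  funext x
  simpa using deriv_comp_mul_left k Real.sin x

lemma deriv_deriv_sin_const_mul (k x : ℝ) :
    deriv (deriv fun x => Real.sin (k * x)) x = -k ^ 2 * Real.sin (k * x) := by
  have hcos : deriv (fun y => Real.cos (k * y)) x = -(k * Real.sin (k * x)) := by
    simpa using deriv_comp_mul_left k Real.cos x
  rw [deriv_sin_const_mul, deriv_const_mul_field, hcos]
  ring

lemma isLaplacianMode_sin_const_mul (k : ℝ) :
    IsLaplacianMode (fun x => Real.sin (k * x)) (k ^ 2) where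
  contDiff := by fun_prop
  deriv_deriv := deriv_deriv_sin_const_mul k

/-- The algebraic Riccati equation `AᵀP + PA + Q = P b bᵀ P` of the linear-quadratic regulator for
the single-input system `z' = A z + b u`, with the control weight absorbed into `b`. -/
def AlgebraicRiccati {ι : Type*} [Fintype ι] (A : Matrix ι ι ℝ) (b : ι → ℝ)
    (P Q : Matrix ι ι ℝ) : Prop :=
  Aᵀ * P + P * A + Q = P * Matrix.vecMulVec b b * P

/-- The generator of the damped oscillator `a'' = -μ a - α a'` in the state `(a, a')`. -/
def dampedOscillator (μ α : ℝ) : Matrix (Fin 2) (Fin 2) ℝ :=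
  !![0, 1; -μ, -α]

lemma algebraicRiccati_dampedOscillator_iff {μ α b : ℝ} {P Q : Matrix (Fin 2) (Fin 2) ℝ} :
    AlgebraicRiccati (dampedOscillator μ α) ![0, b] P Q ↔
      -μ * (P 1 0 + P 0 1) + Q 0 0 = b ^ 2 * P 0 1 * P 1 0 ∧
      P 0 0 - α * P 0 1 - μ * P 1 1 + Q 0 1 = b ^ 2 * P 0 1 * P 1 1 ∧
      P 0 0 - α * P 1 0 - μ * P 1 1 + Q 1 0 = b ^ 2 * P 1 1 * P 1 0 ∧
      P 0 1 + P 1 0 - 2 * α * P 1 1 + Q 1 1 = b ^ 2 * P 1 1 * P 1 1 := by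
  simp only [AlgebraicRiccati, dampedOscillator, ← Matrix.ext_iff, Fin.forall_fin_two,
    Matrix.add_apply, Matrix.mul_apply, Matrix.transpose_apply, Matrix.vecMulVec_apply,
    Fin.sum_univ_two, Matrix.of_apply, Matrix.cons_val_zero, Matrix.cons_val_one, and_assoc]
  refine and_congr ?_ (and_congr ?_ (and_congr ?_ ?_)) <;> ring_nf

lemma algebraicRiccati_sin_mul_pi {k α γ P11 P12 P22 Q11 Q12 Q22 : ℝ}
    (h1 : 0 = -2 * k ^ 2 * Real.pi ^ 2 * P12 + Q11
        - k ^ 2 * Real.pi ^ 2 * γ ^ 2 * P12 ^ 2)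
    (h2 : 0 = P11 - α * P12 - k ^ 2 * Real.pi ^ 2 * P22 + Q12
        - k ^ 2 * Real.pi ^ 2 * γ ^ 2 * P12 * P22)
    (h3 : 0 = 2 * P12 - 2 * α * P22 + Q22 - k ^ 2 * Real.pi ^ 2 * γ ^ 2 * P22 ^ 2) :
    AlgebraicRiccati (dampedOscillator ((k * Real.pi) ^ 2) α)
      ![0, γ * deriv (fun x => Real.sin (k * Real.pi * x)) 0]
      !![P11, P12; P12, P22] !![Q11, Q12; Q12, Q22] := by
  have hflux : deriv (fun x => Real.sin (k * Real.pi * x)) 0 = k * Real.pi := by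
    simp [deriv_sin_const_mul]
  rw [hflux, algebraicRiccati_dampedOscillator_iff]
  simp only [Matrix.of_apply, Matrix.cons_val_zero, Matrix.cons_val_one]
  refine ⟨?_, ?_, ?_, ?_⟩
  · linear_combination -h1
  · linear_combination -h2
  · linear_combination -h2
  · linear_combination -h3

/-- The four Riccati PDEs at `(x₁, x₂)` for Dirichlet boundary control of the damped wave equation,
with `γ² = β²/R`; the boundary conditions on `P` are not included. The matrix indices `0`, `1` stand
for the paper's `1`, `2`. -/
def RiccatiPDE (α γ : ℝ) (P Q : ℝ → ℝ → Matrix (Fin 2) (Fin 2) ℝ) (x₁ x₂ : ℝ) : Prop :=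
  (deriv (deriv fun y => P y x₂ 1 0) x₁ + deriv (deriv fun y => P x₁ y 0 1) x₂ + Q x₁ x₂ 0 0 =
    γ ^ 2 * deriv (fun y => P x₁ y 0 1) 0 * deriv (fun y => P y x₂ 1 0) 0) ∧
  (P x₁ x₂ 0 0 - α * P x₁ x₂ 0 1 + deriv (deriv fun y => P y x₂ 1 1) x₁ + Q x₁ x₂ 0 1 =
    γ ^ 2 * deriv (fun y => P x₁ y 0 1) 0 * deriv (fun y => P y x₂ 1 1) 0) ∧
  (P x₁ x₂ 0 0 - α * P x₁ x₂ 1 0 + deriv (deriv fun y => P x₁ y 1 1) x₂ + Q x₁ x₂ 1 0 =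
    γ ^ 2 * deriv (fun y => P x₁ y 1 1) 0 * deriv (fun y => P y x₂ 1 0) 0) ∧
  (P x₁ x₂ 0 1 + P x₁ x₂ 1 0 - 2 * α * P x₁ x₂ 1 1 + Q x₁ x₂ 1 1 =
    γ ^ 2 * deriv (fun y => P x₁ y 1 1) 0 * deriv (fun y => P y x₂ 1 1) 0)

theorem riccatiPDE_modeKernel {φ : ℝ → ℝ} {α γ μ : ℝ} {P Q : Matrix (Fin 2) (Fin 2) ℝ}
    (hφ : IsLaplacianMode φ μ)
    (hP : AlgebraicRiccati (dampedOscillator μ α) ![0, γ * deriv φ 0] P Q) (x₁ x₂ : ℝ) :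
    RiccatiPDE α γ (modeKernel φ P) (modeKernel φ Q) x₁ x₂ := by
  obtain ⟨h₁₁, h₁₂, h₂₁, h₂₂⟩ := algebraicRiccati_dampedOscillator_iff.mp hP
  simp only [RiccatiPDE, hφ.deriv_deriv_modeKernel_left, hφ.deriv_deriv_modeKernel_right]
  simp only [deriv_modeKernel_left, deriv_modeKernel_right]
  simp only [modeKernel_apply]
  refine ⟨?_, ?_, ?_, ?_⟩
  · linear_combination φ x₁ * φ x₂ * h₁₁
  · linear_combination φ x₁ * φ x₂ * h₁₂
  · linear_combination φ x₁ * φ x₂ * h₂₁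
  · linear_combination φ x₁ * φ x₂ * h₂₂

theorem dirichlet_riccati_pde_single_mode_general {φ : ℝ → ℝ} {α γ μ : ℝ}
    {P Q : Matrix (Fin 2) (Fin 2) ℝ} (hφ : IsLaplacianMode φ μ) (hφ_zero : φ 0 = 0)
    (hφ_one : φ 1 = 0)
    (hP : AlgebraicRiccati (dampedOscillator μ α) ![0, γ * deriv φ 0] P Q) :
    (∀ x₁ x₂ : ℝ, (x₁ = 0 ∨ x₁ = 1 ∨ x₂ = 0 ∨ x₂ = 1) → modeKernel φ P x₁ x₂ = 0) ∧
      ∀ x₁ x₂ : ℝ, RiccatiPDE α γ (modeKernel φ P) (modeKernel φ Q) x₁ x₂ := by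
  refine ⟨fun x₁ x₂ hx => modeKernel_eq_zero P ?_, riccatiPDE_modeKernel hφ hP⟩
  rcases hx with rfl | rfl | rfl | rfl <;> simp [hφ_zero, hφ_one]

/-- If `(P₁₁, P₁₂, P₂₂)` solves the `n`-th Dirichlet algebraic
Riccati equations, then the single-mode kernel
`P(x₁,x₂) = [[P₁₁,P₁₂],[P₁₂,P₂₂]] sin(nπx₁) sin(nπx₂)` satisfies the Dirichlet
boundary conditions and the four Riccati partial differential equations with
weight kernel `Q(x₁,x₂) = [[Q₁₁,Q₁₂],[Q₁₂,Q₂₂]] sin(nπx₁) sin(nπx₂)`. -/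
theorem dirichlet_riccati_pde_single_mode
    (n : ℕ) (hn : 1 ≤ n) (α γ P11 P12 P22 Q11 Q12 Q22 : ℝ) (hα : 0 ≤ α)
    (h1 : 0 = -2 * (n : ℝ) ^ 2 * Real.pi ^ 2 * P12 + Q11
        - (n : ℝ) ^ 2 * Real.pi ^ 2 * γ ^ 2 * P12 ^ 2)
    (h2 : 0 = P11 - α * P12 - (n : ℝ) ^ 2 * Real.pi ^ 2 * P22 + Q12
        - (n : ℝ) ^ 2 * Real.pi ^ 2 * γ ^ 2 * P12 * P22)
    (h3 : 0 = 2 * P12 - 2 * α * P22 + Q22 - (n : ℝ) ^ 2 * Real.pi ^ 2 * γ ^ 2 * P22 ^ 2) :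
    -- Dirichlet boundary conditions on the kernel P
    (∀ x₁ x₂ : ℝ, (x₁ = 0 ∨ x₁ = 1 ∨ x₂ = 0 ∨ x₂ = 1) →
      sinKer P11 n x₁ x₂ = 0 ∧ sinKer P12 n x₁ x₂ = 0 ∧ sinKer P22 n x₁ x₂ = 0) ∧
    -- the four Riccati PDEs
    (∀ x₁ ∈ Set.Icc (0 : ℝ) 1, ∀ x₂ ∈ Set.Icc (0 : ℝ) 1,
      -- (i)
      (deriv (deriv (fun y => sinKer P12 n y x₂)) x₁ +
          deriv (deriv (fun y => sinKer P12 n x₁ y)) x₂ + sinKer Q11 n x₁ x₂ =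
        γ ^ 2 * deriv (fun y => sinKer P12 n x₁ y) 0 *
          deriv (fun y => sinKer P12 n y x₂) 0) ∧
      -- (ii)
      (sinKer P11 n x₁ x₂ - α * sinKer P12 n x₁ x₂ +
          deriv (deriv (fun y => sinKer P22 n y x₂)) x₁ + sinKer Q12 n x₁ x₂ =
        γ ^ 2 * deriv (fun y => sinKer P12 n x₁ y) 0 *
          deriv (fun y => sinKer P22 n y x₂) 0) ∧
      -- (iii)
      (sinKer P11 n x₁ x₂ - α * sinKer P12 n x₁ x₂ +
          deriv (deriv (fun y => sinKer P22 n x₁ y)) x₂ + sinKer Q12 n x₁ x₂ =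
        γ ^ 2 * deriv (fun y => sinKer P22 n x₁ y) 0 *
          deriv (fun y => sinKer P12 n y x₂) 0) ∧
      -- (iv)
      (sinKer P12 n x₁ x₂ + sinKer P12 n x₁ x₂ - 2 * α * sinKer P22 n x₁ x₂ +
          sinKer Q22 n x₁ x₂ =
        γ ^ 2 * deriv (fun y => sinKer P22 n x₁ y) 0 *
          deriv (fun y => sinKer P22 n y x₂) 0)) := by
  obtain ⟨hbdry, hpde⟩ := dirichlet_riccati_pde_single_mode_general
    (isLaplacianMode_sin_const_mul (n * Real.pi)) (by simp) (by simp [Real.sin_nat_mul_pi])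
    (algebraicRiccati_sin_mul_pi h1 h2 h3)
  exact ⟨fun x₁ x₂ hx => have hP := congr_fun₂ (hbdry x₁ x₂ hx); ⟨hP 0 0, hP 0 1, hP 1 1⟩,
    fun x₁ _ x₂ _ => hpde x₁ x₂⟩
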